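/- arXiv:1401.7513 — 2 statements merged into one kernel-verified Lean document; each statement's English description precedes it below -/
import Mathlib

section
/- Let p be an odd prime, P a finite noncyclic p-group with cyclic center, and Z = Ω₁(Z(P)). Let X be an extraspecial subgroup of P of exponent p with Z(X) = Z. Then X is maximal among subgroups T with Z < T = Ω₁(T) and [T,T] ≤ Z if and only if Ω₁(C_P(X)) = Z. -/
/-- `G` is extraspecial for the prime `p`: its center has order `p` and `G/Z(G)`
is elementary abelian (nontrivial, abelian of exponent `p`). -/
def IsExtraspecial (p : ℕ) (G : Type*) [Group G] : Prop :=
  Nat.card (Subgroup.center G) = p ∧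
  Nontrivial (G ⧸ Subgroup.center G) ∧
  (∀ a b : G ⧸ Subgroup.center G, a * b = b * a) ∧
  (∀ a : G ⧸ Subgroup.center G, a ^ p = 1)

open scoped commutatorElement

theorem aux_comm_mul {P : Type*} [Group P] (t x y : P)
    (h : ⁅t, y⁆ ∈ Subgroup.center P) : ⁅t, x * y⁆ = ⁅t, x⁆ * ⁅t, y⁆ := by
  have h1 := Subgroup.mem_center_iff.1 h x
  calc ⁅t, x * y⁆ = ⁅t, x⁆ * (x * ⁅t, y⁆) * x⁻¹ := by
        simp only [commutatorElement_def]; group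
    _ = ⁅t, x⁆ * ⁅t, y⁆ := by rw [h1]; group

theorem aux_mul_pow {P : Type*} [Group P] (a b c : P) (hc : c ∈ Subgroup.center P)
    (h : b * a = c * (a * b)) (n : ℕ) :
    (a * b) ^ n = c ^ (∑ i ∈ Finset.range n, i) * (a ^ n * b ^ n) := by
  have hcc : ∀ g : P, ∀ k : ℕ, g * c ^ k = c ^ k * g := fun g k =>
    Subgroup.mem_center_iff.1 (pow_mem hc k) g
  have h2 : ∀ k : ℕ, b ^ k * a = c ^ k * (a * b ^ k) := by
    intro k
    induction k with
    | zero => simp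
    | succ k ih =>
      calc b ^ (k+1) * a = b * (b ^ k * a) := by rw [pow_succ' b]; group
        _ = (b * c ^ k) * (a * b ^ k) := by rw [ih]; group
        _ = c ^ k * (b * a) * b ^ k := by rw [hcc]; group
        _ = c ^ (k+1) * (a * b ^ (k+1)) := by
          rw [h, pow_succ c, pow_succ' b]; simp only [mul_assoc]
  induction n with
  | zero => simp
  | succ n ih =>
    rw [pow_succ, ih, Finset.sum_range_succ]
    calc c ^ (∑ i ∈ Finset.range n, i) * (a ^ n * b ^ n) * (a * b)
        = c ^ (∑ i ∈ Finset.range n, i) * (a ^ n * (b ^ n * a) * b) := by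
          simp only [mul_assoc]
      _ = c ^ (∑ i ∈ Finset.range n, i) * ((a ^ n * c ^ n) * (a * b ^ n * b)) := by
          rw [h2]; simp only [mul_assoc]
      _ = _ := by
          rw [hcc, pow_add, pow_succ a, pow_succ b]; simp only [mul_assoc]

theorem aux_dual {P : Type*} [Group P] [Finite P]
    (hcyc : IsCyclic (Subgroup.center P)) (Z X : Subgroup P)
    (hZc : Z ≤ Subgroup.center P)
    (hZX : X ⊓ Subgroup.centralizer (X : Set P) = Z)
    (hXX : ∀ a ∈ X, ∀ b ∈ X, ⁅a, b⁆ ∈ Z)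
    (t : P) (ht : ∀ x ∈ X, ⁅t, x⁆ ∈ Z) :
    ∃ x₀ ∈ X, ∀ x ∈ X, ⁅t, x⁆ = ⁅x₀, x⁆ := by
  classical
  obtain ⟨ι, hι⟩ : ∃ ι : Subgroup.center P →* ℂˣ, Function.Injective ι := by
    have : NeZero (Nat.card (Subgroup.center P)) := ⟨Nat.card_pos.ne'⟩
    have e : Subgroup.center P ≃* rootsOfUnity (Nat.card (Subgroup.center P)) ℂ :=
      mulEquivOfCyclicCardEq (by
        rw [Complex.card_rootsOfUnity])
    exact ⟨(Subgroup.subtype _).comp e.toMonoidHom,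
      (Subtype.val_injective).comp e.injective⟩
  let N : Subgroup X := Z.subgroupOf X
  have hN : N.Normal := by
    constructor
    intro n hn g
    have hn' : (n : P) ∈ Z := hn
    have h1 := Subgroup.mem_center_iff.1 (hZc hn') g
    change (g : P) * n * (g : P)⁻¹ ∈ Z
    rw [h1]; simpa using hn'
  let : CommGroup (X ⧸ N) :=
    { (inferInstance : Group (X ⧸ N)) with
      mul_comm := by
        intro a b
        induction a using QuotientGroup.induction_on with | _ a
        induction b using QuotientGroup.induction_on with | _ b
        rw [← QuotientGroup.mk_mul, ← QuotientGroup.mk_mul, QuotientGroup.eq]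
        change ((a : P) * b)⁻¹ * (b * a) ∈ Z
        have := hXX _ (inv_mem b.2) _ (inv_mem a.2)
        simpa [commutatorElement_def, mul_assoc] using this }
  let χ₀ : {t : P // ∀ x ∈ X, ⁅t, x⁆ ∈ Z} → X →* ℂˣ := fun t =>
    ι.comp
    { toFun := fun x => ⟨⁅t.1, (x : P)⁆, hZc (t.2 x x.2)⟩
      map_one' := by ext; simp
      map_mul' := by
        intro x y
        ext
        exact aux_comm_mul _ _ _ (hZc (t.2 y y.2)) }
  let χ : {t : P // ∀ x ∈ X, ⁅t, x⁆ ∈ Z} → (X ⧸ N) →* ℂˣ := fun t =>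
    QuotientGroup.lift N (χ₀ t) (by
      intro x hx
      have hx' : (x : P) ∈ Z := hx
      have h1 := Subgroup.mem_center_iff.1 (hZc hx') t.1
      have h2 : ⁅t.1, (x : P)⁆ = 1 := commutatorElement_eq_one_iff_mul_comm.2 h1
      have h3 : (⟨⁅t.1, (x : P)⁆, hZc (t.2 x x.2)⟩ : Subgroup.center P) = 1 := by
        ext; exact h2
      change ι ⟨⁅t.1, (x : P)⁆, hZc (t.2 x x.2)⟩ = 1
      rw [h3, map_one])
  have hχ : ∀ s t, χ s = χ t → ∀ x ∈ X, ⁅s.1, x⁆ = ⁅t.1, x⁆ := by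
    intro s t h x hx
    have h1 := DFunLike.congr_fun h (QuotientGroup.mk (⟨x, hx⟩ : X))
    have h2 := hι h1
    exact congrArg Subtype.val h2
  let f : (X ⧸ N) → ((X ⧸ N) →* ℂˣ) := fun q => χ ⟨(q.out : X), fun x hx => hXX _ q.out.2 x hx⟩
  have hf : Function.Injective f := by
    intro q r h
    have h1 := hχ _ _ h
    rw [← QuotientGroup.out_eq' q, ← QuotientGroup.out_eq' r, QuotientGroup.eq]
    change ((q.out : X) : P)⁻¹ * (r.out : X) ∈ Z
    rw [← hZX]
    refine Subgroup.mem_inf.2 ⟨mul_mem (inv_mem q.out.2) r.out.2, ?_⟩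
    rw [Subgroup.mem_centralizer_iff]
    intro x hx
    have h2 := h1 x hx
    simp only [commutatorElement_def] at h2
    generalize ((q.out : X) : P) = a at *
    generalize ((r.out : X) : P) = b at *
    have h3 : a * x * a⁻¹ = b * x * b⁻¹ := mul_right_cancel h2
    calc x * (a⁻¹ * b) = a⁻¹ * (a * x * a⁻¹) * b := by group
      _ = a⁻¹ * b * x := by rw [h3]; group
  have : NeZero (Monoid.exponent (X ⧸ N)) := ⟨Monoid.exponent_ne_zero_of_finite⟩
  have hcard := CommGroup.card_monoidHom_of_hasEnoughRootsOfUnity (X ⧸ N) ℂ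
  have : Finite ((X ⧸ N) →* ℂˣ) := Nat.finite_of_card_ne_zero (by
    rw [hcard]; exact Nat.card_pos.ne')
  have hsurj : Function.Surjective f :=
    ((Nat.bijective_iff_injective_and_card f).2 ⟨hf, hcard.symm⟩).2
  obtain ⟨q, hq⟩ := hsurj (χ ⟨t, ht⟩)
  exact ⟨(q.out : X), q.out.2, fun x hx => (hχ _ _ hq x hx).symm⟩

/-- Let `p` be an odd prime, `P` a finite noncyclic `p`-group with cyclic center,
`Z = Ω₁(Z(P))`, and `X ≤ P` extraspecial of exponent `p` with `Z(X) = Z`.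
Then `X` is maximal in `ℳ_Z(P) = {T ≤ P : Z < T = Ω₁(T), [T,T] ≤ Z}` if and
only if `Ω₁(C_P(X)) = Z`. -/
theorem stmt_8 {p : ℕ} (hp : p.Prime) (hodd : Odd p)
    {P : Type*} [Group P] [Finite P] (hP : IsPGroup p P) (hnc : ¬ IsCyclic P)
    (hcyc : IsCyclic (Subgroup.center P))
    (Z : Subgroup P)
    (hZ : Z = Subgroup.closure {x : P | x ∈ Subgroup.center P ∧ x ^ p = 1})
    (X : Subgroup P) (hX : IsExtraspecial p X)
    (hexp : ∀ x ∈ X, x ^ p = 1)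
    (hZX : X ⊓ Subgroup.centralizer (X : Set P) = Z) :
    (∀ T : Subgroup P, Z < T →
        T = Subgroup.closure {x : P | x ∈ T ∧ x ^ p = 1} →
        ⁅T, T⁆ ≤ Z → X ≤ T → T = X) ↔
      Subgroup.closure
          {x : P | x ∈ Subgroup.centralizer (X : Set P) ∧ x ^ p = 1} = Z := by
  have hZc : Z ≤ Subgroup.center P := by
    rw [hZ, Subgroup.closure_le]; exact fun x hx => hx.1
  have hZleX : Z ≤ X := hZX ▸ inf_le_left
  obtain ⟨-, hnt, hcomm, -⟩ := hX
  have hcen : ∀ z : X, z ∈ Subgroup.center X → (z : P) ∈ Z := by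
    intro z hz
    rw [← hZX]
    refine Subgroup.mem_inf.2 ⟨z.2, ?_⟩
    rw [Subgroup.mem_centralizer_iff]
    intro x hx
    exact congrArg Subtype.val (Subgroup.mem_center_iff.1 hz ⟨x, hx⟩)
  have hXX : ∀ a ∈ X, ∀ b ∈ X, ⁅a, b⁆ ∈ Z := by
    intro a ha b hb
    have h := hcomm (QuotientGroup.mk ⟨b, hb⟩⁻¹) (QuotientGroup.mk ⟨a, ha⟩⁻¹)
    rw [← QuotientGroup.mk_mul, ← QuotientGroup.mk_mul, eq_comm, QuotientGroup.eq] at h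
    have h2 := hcen _ h
    have h3 : ⁅b, a⁆ ∈ Z := by simpa [commutatorElement_def, mul_assoc] using h2
    simpa using inv_mem h3
  have hZltX : Z < X := by
    refine lt_of_le_of_ne hZleX ?_
    rintro rfl
    obtain ⟨q, hq⟩ := exists_ne (1 : Z ⧸ Subgroup.center Z)
    induction q using QuotientGroup.induction_on with | _ a
    apply hq
    rw [QuotientGroup.eq_one_iff, Subgroup.mem_center_iff]
    intro g
    ext
    exact Subgroup.mem_center_iff.1 (hZc a.2) g
  constructor
  · intro hmax
    apply le_antisymm
    · rw [Subgroup.closure_le]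
      rintro x ⟨hxc, hxp⟩
      have hxc' := Subgroup.mem_centralizer_iff.1 hxc
      let S : Set P := insert x (X : Set P)
      have hXT : X ≤ Subgroup.closure S := fun y hy =>
        Subgroup.subset_closure (Set.mem_insert_of_mem _ hy)
      have hxT : x ∈ Subgroup.closure S := Subgroup.subset_closure (Set.mem_insert _ _)
      have hgen : ∀ a ∈ S, ∀ b ∈ S, ⁅a, b⁆ ∈ Z := by
        rintro a (rfl | ha) b (rfl | hb)
        · simp
        · rw [commutatorElement_eq_one_iff_mul_comm.2 (hxc' b hb).symm]; exact one_mem _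
        · rw [commutatorElement_eq_one_iff_mul_comm.2 (hxc' a ha)]; exact one_mem _
        · exact hXX a ha b hb
      have hZn : Z.Normal := by
        constructor
        intro n hn g
        rw [Subgroup.mem_center_iff.1 (hZc hn) g]; simpa using hn
      have hT : Subgroup.closure S = X := by
        refine hmax _ (hZltX.trans_le hXT) ?_ ?_ hXT
        · apply le_antisymm
          · rw [Subgroup.closure_le]
            rintro y (rfl | hy)
            · exact Subgroup.subset_closure ⟨hxT, hxp⟩
            · exact Subgroup.subset_closure ⟨hXT hy, hexp y hy⟩
          · rw [Subgroup.closure_le]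
            exact fun y hy => hy.1
        · have key : ∀ a b : P, (∀ c : P, c = a → ⁅c, b⁆ ∈ Z) ↔ 
              (QuotientGroup.mk a * QuotientGroup.mk b : P ⧸ Z) =
                QuotientGroup.mk b * QuotientGroup.mk a := by
            intro a b
            rw [← commutatorElement_eq_one_iff_mul_comm]
            simp only [forall_eq]
            rw [← QuotientGroup.eq_one_iff]
            rfl
          simp only [forall_eq] at key
          rw [Subgroup.commutator_le]
          intro a ha b hb
          rw [key]
          change Commute _ _
          induction ha using Subgroup.closure_induction with
          | mem a ha =>
            induction hb using Subgroup.closure_induction with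
            | mem b hb => exact (key a b).1 (hgen a ha b hb)
            | one => exact Commute.one_right _
            | mul u v _ _ h1 h2 => exact h1.mul_right h2
            | inv u _ h1 => exact h1.inv_right
          | one => exact Commute.one_left _
          | mul u v _ _ h1 h2 => exact h1.mul_left h2
          | inv u _ h1 => exact h1.inv_left
      change x ∈ Z
      rw [← hZX]
      exact ⟨hT ▸ hxT, hxc⟩
    · intro z hz
      apply Subgroup.subset_closure
      exact ⟨(hZX.symm ▸ hz : z ∈ X ⊓ _).2, hexp z (hZleX hz)⟩
  · intro hO T _ hTgen hTT hXT
    refine le_antisymm ?_ hXT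
    have hTc : ∀ a ∈ T, ∀ b ∈ T, ⁅a, b⁆ ∈ Z := Subgroup.commutator_le.1 hTT
    have hTexp : ∀ t ∈ T, t ^ p = 1 := by
      intro t ht
      have ht' := ht
      rw [hTgen] at ht'
      clear ht
      have : t ∈ T ∧ t ^ p = 1 := by
        induction ht' using Subgroup.closure_induction with
        | mem x hx => exact hx
        | one => exact ⟨one_mem _, one_pow _⟩
        | inv x _ h => exact ⟨inv_mem h.1, by rw [inv_pow, h.2, inv_one]⟩
        | mul x y _ _ h1 h2 =>
          refine ⟨mul_mem h1.1 h2.1, ?_⟩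
          have hz := hTc y h2.1 x h1.1
          rw [aux_mul_pow x y ⁅y, x⁆ (hZc hz) (by simp only [commutatorElement_def]; group),
            h1.2, h2.2]
          obtain ⟨k, hk⟩ := hodd
          have hs : ∑ i ∈ Finset.range p, i = p * k := by
            rw [Finset.sum_range_id, hk]
            simp [Nat.mul_div_assoc]
          rw [hs, pow_mul, hexp _ (hZleX hz)]
          simp
      exact this.2
    intro t ht
    obtain ⟨x₀, hx₀, h⟩ := aux_dual hcyc Z X hZc hZX hXX t (fun x hx => hTc t ht x (hXT hx))
    have hc : x₀⁻¹ * t ∈ Z := by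
      rw [← hO]
      apply Subgroup.subset_closure
      refine ⟨?_, hTexp _ (mul_mem (inv_mem (hXT hx₀)) ht)⟩
      rw [Subgroup.mem_centralizer_iff]
      intro x hx
      have h2 := h x hx
      simp only [commutatorElement_def] at h2
      have h3 : t * x * t⁻¹ = x₀ * x * x₀⁻¹ := mul_right_cancel h2
      calc x * (x₀⁻¹ * t) = x₀⁻¹ * (x₀ * x * x₀⁻¹) * t := by group
        _ = x₀⁻¹ * t * x := by rw [← h3]; group
    have := mul_mem hx₀ (hZleX hc)
    simpa using this
end

section
/- Let p be an odd prime, P a finite noncyclic p-group with cyclic center, and Z = Ω₁(Z(P)). If 𝒮 is a collection of at least two distinct maximal elements of ℳ_Z(P) = {X ≤ P : Z < X = Ω₁(X), [X,X] ≤ Z}, then the intersection Y = ⋂_{S ∈ 𝒮} S lies in ℳ_Z(P) and Y is not extraspecial. -/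
lemma class2_pow {G : Type*} [Group G] (u v c : G) (hcu : Commute c u) (hcv : Commute c v)
    (h : v * u = u * v * c) (n : ℕ) : (u * v) ^ n = u ^ n * v ^ n * c ^ (n.choose 2) := by
  have h2 : ∀ n : ℕ, v ^ n * u = u * v ^ n * c ^ n := by
    intro n
    induction n with
    | zero => simp
    | succ k ih =>
      have h3 : c ^ k * v = v * c ^ k := (hcv.pow_left k).eq
      calc v ^ (k+1) * u = v * (v ^ k * u) := by rw [pow_succ', mul_assoc]
        _ = (v * u) * v ^ k * c ^ k := by rw [ih]; group
        _ = u * v * (c * v ^ k) * c ^ k := by rw [h]; group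
        _ = u * v * (v ^ k * c) * c ^ k := by rw [(hcv.pow_right k).eq]
        _ = u * v ^ (k+1) * c ^ (k+1) := by rw [pow_succ' v, pow_succ' c]; simp only [mul_assoc]
  induction n with
  | zero => simp
  | succ k ih =>
    have e1 : c ^ (k.choose 2) * (u * v) = u * v * c ^ (k.choose 2) :=
      ((hcu.mul_right hcv).pow_left _).eq
    rw [Nat.choose_succ_succ' k 1, Nat.choose_one_right, pow_succ (u * v), ih]
    calc u ^ k * v ^ k * c ^ k.choose 2 * (u * v) = u ^ k * (v ^ k * u) * v * c ^ k.choose 2 := by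
          rw [mul_assoc, e1]; simp only [mul_assoc]
      _ = u ^ k * u * v ^ k * (c ^ k * v) * c ^ k.choose 2 := by
          rw [h2]; simp only [mul_assoc]
      _ = _ := by
          rw [(hcv.pow_left k).eq, pow_succ u, pow_succ v, pow_add c]; simp only [mul_assoc]

lemma class2_pow_p {p : ℕ} (hp : p.Prime) (hodd : Odd p) {G : Type*} [Group G] (u v c : G)
    (hcu : Commute c u) (hcv : Commute c v)
    (h : v * u = u * v * c) (hc : c ^ p = 1) : (u * v) ^ p = u ^ p * v ^ p := by
  have : p ∣ p.choose 2 := hp.dvd_choose_self (by norm_num) (by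
    have := hp.two_le
    rcases hodd with ⟨k, hk⟩; omega)
  obtain ⟨m, hm⟩ := this
  rw [class2_pow u v c hcu hcv h, hm, pow_mul, hc]; simp

lemma int_lemma {p : ℕ} (hp : p.Prime) (hodd : Odd p) (n : ℕ) (k : ℤ)
    (h : (p : ℤ) ^ n ∣ k ^ p - 1) : (p : ℤ) ^ n ∣ (k - 1) * p := by
  rcases Nat.eq_zero_or_pos n with rfl | hn
  · simp
  haveI := Fact.mk hp
  have h1 : (p : ℤ) ∣ k - 1 := by
    have h2 : (p : ℤ) ∣ k ^ p - 1 := (dvd_pow_self _ hn.ne').trans h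
    rw [← ZMod.intCast_zmod_eq_zero_iff_dvd] at h2 ⊢
    push_cast at h2 ⊢
    rwa [ZMod.pow_card] at h2
  have h3 : ¬ (p : ℤ) ∣ k := by
    intro h4
    have : (p : ℤ) ∣ 1 := by simpa using dvd_sub h4 h1
    exact hp.one_lt.ne' (by exact_mod_cast Int.eq_one_of_dvd_one (by positivity) this)
  have h5 := Int.emultiplicity_pow_sub_pow hp hodd (x := k) (y := 1) h1 h3 p
  have hpp : emultiplicity p p = 1 := by
    have : FiniteMultiplicity p p := Nat.finiteMultiplicity_iff.2 ⟨hp.one_lt.ne', hp.pos⟩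
    simpa using this.emultiplicity_self
  rw [one_pow, hpp] at h5
  have h6 : emultiplicity (p : ℤ) ((k - 1) * p) = emultiplicity (p : ℤ) (k - 1) + 1 := by
    rw [emultiplicity_mul (Nat.prime_iff_prime_int.1 hp)]
    congr 1
    rw [Int.natCast_emultiplicity]; exact hpp
  rw [pow_dvd_iff_le_emultiplicity] at h ⊢
  rw [h6, ← h5]; exact h

lemma cyc_torsion {p : ℕ} (hp : p.Prime) {G : Type*} [Group G] [Finite G] (A Z : Subgroup G)
    [IsCyclic A] (hZA : Z ≤ A) (hZ : Nat.card Z = p) (x : G) (hx : x ∈ A) (hxp : x ^ p = 1) :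
    x ∈ Z := by
  classical
  have := Fintype.ofFinite G
  have hle := IsCyclic.card_pow_eq_one_le (α := A) hp.pos
  set F : Finset A := Finset.univ.filter (fun a : A => a ^ p = 1) with hF
  let Z' : Finset A := Finset.univ.filter (fun a : A => (a : G) ∈ Z)
  have hsub : Z' ⊆ F := by
    intro a ha
    simp only [Z', hF, Finset.mem_filter, Finset.mem_univ, true_and] at ha ⊢
    have : (⟨a, ha⟩ : Z) ^ p = 1 := by rw [← hZ]; exact pow_card_eq_one'
    ext
    simpa using congrArg Subtype.val this
  have hcard : Z'.card = p := by
    rw [← hZ, ← Nat.card_congr (Subgroup.subgroupOfEquivOfLe hZA).toEquiv, Nat.card_eq_fintype_card,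
      Fintype.card_subtype]
    rfl
  have heq := Finset.eq_of_subset_of_card_le hsub (by rw [hcard]; exact hle)
  have : (⟨x, hx⟩ : A) ∈ F := by
    simp only [hF, Finset.mem_filter, Finset.mem_univ, true_and]
    ext; simpa using hxp
  rw [← heq] at this
  simpa [Z'] using this

lemma conj_mem {p : ℕ} (hp : p.Prime) (hodd : Odd p) {G : Type*} [Group G] [Finite G]
    (hG : IsPGroup p G) (A Z : Subgroup G) (hA : A.Normal)
    [hcyc : IsCyclic A] (hZA : Z ≤ A) (hZ : Nat.card Z = p) (u : G) (hu : u ^ p ∈ A) (a : G)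
    (ha : a ∈ A) : u * a * u⁻¹ * a⁻¹ ∈ Z := by
  have := Fact.mk hp
  obtain ⟨g, rfl⟩ := (Subgroup.isCyclic_iff_exists_zpowers_eq_top A).1 hcyc
  obtain ⟨n, hn⟩ := IsPGroup.iff_orderOf.1 hG g
  obtain ⟨k, hk⟩ := Subgroup.mem_zpowers_iff.1 (hA.conj_mem g (Subgroup.mem_zpowers g) u)
  have hkp : ∀ m : ℕ, u ^ m * g * (u ^ m)⁻¹ = g ^ (k ^ m) := by
    intro m
    induction m with
    | zero => simp
    | succ m ih =>
      have : u ^ (m + 1) * g * (u ^ (m + 1))⁻¹ = u * (u ^ m * g * (u ^ m)⁻¹) * u⁻¹ := by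
        rw [pow_succ']; group
      rw [this, ih, ← conj_zpow, ← hk, ← zpow_mul, pow_succ']
  have h1 : u ^ p * g * (u ^ p)⁻¹ = g := by
    obtain ⟨j, hj⟩ := Subgroup.mem_zpowers_iff.1 hu
    rw [← hj]; group
  rw [hkp] at h1
  have h2 : g ^ (k ^ p - 1) = 1 := by rw [zpow_sub, h1]; simp
  have h3 := int_lemma hp hodd n k (by
    have := orderOf_dvd_iff_zpow_eq_one.2 h2
    rw [hn] at this; exact_mod_cast this)
  have h4 : (g ^ (k - 1)) ^ p = 1 := by
    rw [← zpow_natCast, ← zpow_mul]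
    apply orderOf_dvd_iff_zpow_eq_one.1
    rw [hn]; exact_mod_cast h3
  have h5 : g ^ (k - 1) ∈ Z := cyc_torsion hp _ Z hZA hZ _
    (Subgroup.zpow_mem _ (Subgroup.mem_zpowers g) _) h4
  obtain ⟨i, rfl⟩ := Subgroup.mem_zpowers_iff.1 ha
  have : u * g ^ i * u⁻¹ * (g ^ i)⁻¹ = (g ^ (k - 1)) ^ i := by
    rw [← conj_zpow, ← hk, ← zpow_mul, ← zpow_mul, ← zpow_neg, ← zpow_add]; congr 1; ring
  rw [this]; exact Z.zpow_mem h5 i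

lemma lemA {p : ℕ} (hp : p.Prime) (hodd : Odd p) {G : Type*} [Group G] [Finite G]
    (hG : IsPGroup p G) (Z : Subgroup G) (hZ : Nat.card Z = p) (hZc : Z ≤ Subgroup.center G)
    (hy : ∃ y : G, y ∉ Z ∧ y ^ p = 1) :
    ∃ x : G, x ∉ Z ∧ x ^ p = 1 ∧ ∀ d : G, d * x * d⁻¹ * x⁻¹ ∈ Z := by
  have := Fact.mk hp
  have hZp : ∀ z ∈ Z, z ^ p = 1 := by
    intro z hz
    have : (⟨z, hz⟩ : Z) ^ p = 1 := by rw [← hZ]; exact pow_card_eq_one'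
    simpa using congrArg Subtype.val this
  have hZcomm : ∀ z ∈ Z, ∀ g : G, Commute z g := fun z hz g =>
    ((Subgroup.mem_center_iff.1 (hZc hz)) g).symm
  have hZn : Z.Normal := ⟨fun z hz g => by
    rw [← (hZcomm z hz g).eq]; simpa using hz⟩
  have hZcyc : IsCyclic Z := isCyclic_of_prime_card hZ
  let C : Set (Subgroup G) := {A | A.Normal ∧ IsCyclic A ∧ Z ≤ A}
  obtain ⟨A, hAmax⟩ := (Set.toFinite C).exists_maximal ⟨Z, hZn, hZcyc, le_rfl⟩
  obtain ⟨hAn, hAc, hZA⟩ := hAmax.prop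
  have hAne : A ≠ ⊤ := by
    rintro rfl
    obtain ⟨y, hyZ, hyp⟩ := hy
    exact hyZ (cyc_torsion hp ⊤ Z hZA hZ y trivial hyp)
  have hnt : Nontrivial (G ⧸ A) := QuotientGroup.nontrivial_iff.2 hAne
  have hQ := hG.to_quotient A
  have hcn := hQ.center_nontrivial
  obtain ⟨q, hq⟩ := exists_prime_orderOf_dvd_card' (G := Subgroup.center (G ⧸ A)) p
    ((hQ.to_subgroup _).card_eq_or_dvd.resolve_left (by
      intro h; rw [Nat.card_eq_one_iff_unique] at h
      exact not_subsingleton _ h.1))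
  obtain ⟨y, hyq⟩ := QuotientGroup.mk_surjective (q : G ⧸ A)
  have hyA : y ∉ A := by
    intro h
    rw [(QuotientGroup.eq_one_iff y).2 h] at hyq
    have : q = 1 := Subtype.ext hyq.symm
    rw [this, orderOf_one] at hq
    exact hp.one_lt.ne hq
  have hypA : y ^ p ∈ A := by
    rw [← QuotientGroup.eq_one_iff, QuotientGroup.mk_pow, hyq, ← hq]
    exact congrArg Subtype.val (pow_orderOf_eq_one q)
  have hyc : ∀ d : G, d * y * d⁻¹ * y⁻¹ ∈ A := by
    intro d
    rw [← QuotientGroup.eq_one_iff]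
    have := Subgroup.mem_center_iff.1 q.2 (d : G ⧸ A)
    simp only [QuotientGroup.mk_mul, QuotientGroup.mk_inv, hyq]
    rw [this]; group
  obtain ⟨g, hg⟩ := (Subgroup.isCyclic_iff_exists_zpowers_eq_top A).1 hAc
  obtain ⟨m, hm⟩ := Subgroup.mem_zpowers_iff.1 (hg ▸ hypA)
  have hpm : (p : ℤ) ∣ m := by
    by_contra hpm
    -- then `y ^ p` generates `A`
    have hgy : g ∈ Subgroup.zpowers y := by
      obtain ⟨n, hn⟩ := IsPGroup.iff_orderOf.1 hG g
      have hcop : IsCoprime m ((p : ℤ) ^ n) :=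
        (((Nat.prime_iff_prime_int.1 hp).coprime_iff_not_dvd.2 hpm).symm).pow_right
      obtain ⟨r, s, hrs⟩ := hcop
      have : g = (y ^ p) ^ r := by
        have h1 : g ^ (s * (p : ℤ) ^ n) = 1 := by
          apply orderOf_dvd_iff_zpow_eq_one.1
          rw [hn]; push_cast; exact dvd_mul_left _ _
        calc g = g ^ (r * m + s * (p : ℤ) ^ n) := by rw [hrs, zpow_one]
          _ = (y ^ p) ^ r := by rw [zpow_add, h1, mul_one, ← hm, ← zpow_mul, mul_comm]
      rw [this]
      exact Subgroup.zpow_mem _ (Subgroup.pow_mem _ (Subgroup.mem_zpowers y) _) _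
    have hAy : A ≤ Subgroup.zpowers y := by
      rw [← hg]; exact (Subgroup.zpowers_le).2 hgy
    have hyn : (Subgroup.zpowers y).Normal := by
      refine ⟨fun w hw d => ?_⟩
      obtain ⟨i, rfl⟩ := Subgroup.mem_zpowers_iff.1 hw
      rw [← conj_zpow]
      apply Subgroup.zpow_mem
      have : d * y * d⁻¹ = (d * y * d⁻¹ * y⁻¹) * y := by group
      rw [this]
      exact Subgroup.mul_mem _ (hAy (hyc d)) (Subgroup.mem_zpowers y)
    have := hAmax.le_of_ge (y := Subgroup.zpowers y) ⟨hyn, inferInstance, hZA.trans hAy⟩ hAy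
    exact hyA (this (Subgroup.mem_zpowers y))
  obtain ⟨m', rfl⟩ := hpm
  set a : G := (g ^ m')⁻¹ with ha
  have hgA : g ∈ A := hg ▸ Subgroup.mem_zpowers g
  have haA : a ∈ A := A.inv_mem (A.zpow_mem hgA _)
  have hap : a ^ p = (y ^ p)⁻¹ := by
    rw [← hm, ha, inv_pow, ← zpow_natCast, ← zpow_mul, mul_comm]
  have key : ∀ u : G, u ^ p ∈ A → ∀ b ∈ A, (b * u) ^ p = b ^ p * u ^ p := by
    intro u hu b hb
    have h1 := conj_mem hp hodd hG A Z hAn hZA hZ u hu b hb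
    refine class2_pow_p hp hodd b u (u * b * u⁻¹ * b⁻¹) (hZcomm _ h1 _) (hZcomm _ h1 _) ?_
      (hZp _ h1)
    rw [← (hZcomm _ h1 _).eq]; group
  have hw : (a * y) ^ p = 1 := by rw [key y hypA a haA, hap]; simp
  refine ⟨a * y, ?_, hw, ?_⟩
  · intro h
    exact hyA ((A.mul_mem_cancel_left haA).1 (hZA h))
  · intro d
    have hbA : d * (a * y) * d⁻¹ * (a * y)⁻¹ ∈ A := by
      have : d * (a * y) * d⁻¹ * (a * y)⁻¹ =
        (d * a * d⁻¹) * (d * y * d⁻¹ * y⁻¹) * a⁻¹ := by group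
      rw [this]
      exact A.mul_mem (A.mul_mem (hAn.conj_mem a haA d) (hyc d)) (A.inv_mem haA)
    refine cyc_torsion hp A Z hZA hZ _ hbA ?_
    have h1 := key (a * y) (by rw [hw]; exact A.one_mem) _ hbA
    rw [hw, mul_one, inv_mul_cancel_right, conj_pow, hw] at h1
    rw [← h1]; group

lemma lemB {p : ℕ} (hp : p.Prime) {G : Type*} [Group G] [Finite G] (Y Z : Subgroup G)
    (hZ : Nat.card Z = p) (hZc : Z ≤ Subgroup.center G)
    (hYZ : ∀ y ∈ Y, (∀ y' ∈ Y, y * y' = y' * y) → y ∈ Z)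
    (hcomm : ∀ y ∈ Y, ∀ y' ∈ Y, y * y' * y⁻¹ * y'⁻¹ ∈ Z)
    (s : G) (hs : ∀ y ∈ Y, s * y * s⁻¹ * y⁻¹ ∈ Z) :
    ∃ y ∈ Y, ∀ y' ∈ Y, (y⁻¹ * s) * y' = y' * (y⁻¹ * s) := by
  have := Fact.mk hp
  have hZcomm : ∀ z ∈ Z, ∀ g : G, z * g = g * z := fun z hz g =>
    ((Subgroup.mem_center_iff.1 (hZc hz)) g).symm
  have hZcyc : IsCyclic Z := isCyclic_of_prime_card hZ
  letI : CommGroup Z := IsCyclic.commGroup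
  -- a faithful character of `Z`
  obtain ⟨χ, hχ⟩ : ∃ χ : Z →* ℂˣ, Function.Injective χ := by
    have : Nontrivial Z := Finite.one_lt_card_iff_nontrivial.1 (hZ ▸ hp.one_lt)
    obtain ⟨z, hz⟩ := exists_ne (1 : Z)
    obtain ⟨χ, hχ⟩ := CommGroup.exists_apply_ne_one_of_hasEnoughRootsOfUnity Z ℂ hz
    refine ⟨χ, ?_⟩
    rw [← MonoidHom.ker_eq_bot_iff]
    have : Fact (Nat.card Z).Prime := ⟨hZ ▸ hp⟩
    refine (Subgroup.eq_bot_or_eq_top_of_prime_card χ.ker).resolve_right ?_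
    intro h
    exact hχ (MonoidHom.mem_ker.1 (h ▸ Subgroup.mem_top z))
  let N : Subgroup Y := Subgroup.center Y
  letI : CommGroup (Y ⧸ N) :=
    { (inferInstance : Group (Y ⧸ N)) with
      mul_comm := by
        intro a b
        obtain ⟨a, rfl⟩ := QuotientGroup.mk_surjective a
        obtain ⟨b, rfl⟩ := QuotientGroup.mk_surjective b
        rw [← QuotientGroup.mk_mul, ← QuotientGroup.mk_mul, QuotientGroup.eq]
        refine Subgroup.mem_center_iff.2 fun c => ?_
        have h1 : ((a * b)⁻¹ * (b * a) : Y) = (b⁻¹ * a⁻¹ * (b⁻¹)⁻¹ * (a⁻¹)⁻¹ : Y) := by group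
        rw [h1]
        ext
        exact (hZcomm _ (hcomm _ (b⁻¹).2 _ (a⁻¹).2) c).symm }
  let φ : (t : G) → (ht : ∀ y ∈ Y, t * y * t⁻¹ * y⁻¹ ∈ Z) → (Y →* Z) := fun t ht =>
    { toFun := fun y => ⟨t * y * t⁻¹ * (y : G)⁻¹, ht y y.2⟩
      map_one' := by ext; simp
      map_mul' := by
        intro x y
        ext
        have h1 := hZcomm _ (ht y y.2) ((x : G)⁻¹)
        simp only [Subgroup.coe_mul]
        calc t * (x * y) * t⁻¹ * ((x : G) * y)⁻¹
            = t * x * t⁻¹ * ((t * y * t⁻¹ * (y : G)⁻¹) * (x : G)⁻¹) := by group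
          _ = _ := by rw [h1]; group }
  let Φ : (t : G) → (ht : ∀ y ∈ Y, t * y * t⁻¹ * y⁻¹ ∈ Z) → ((Y ⧸ N) →* ℂˣ) := fun t ht =>
    QuotientGroup.lift N (χ.comp (φ t ht)) (by
      intro y hy
      have hyZ : (y : G) ∈ Z := hYZ y y.2 fun y' hy' =>
        (congrArg Subtype.val (Subgroup.mem_center_iff.1 hy ⟨y', hy'⟩)).symm
      have : φ t ht y = 1 := by
        ext
        show t * y * t⁻¹ * (y : G)⁻¹ = 1
        rw [← hZcomm _ hyZ t]; group
      simp [this])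
  have hΦ : ∀ t ht t' ht', Φ t ht = Φ t' ht' → ∀ y ∈ Y, t'⁻¹ * t * y = y * (t'⁻¹ * t) := by
    intro t ht t' ht' h y hy
    have h1 := DFunLike.congr_fun h ((⟨y, hy⟩ : Y) : Y ⧸ N)
    have h2 : φ t ht ⟨y, hy⟩ = φ t' ht' ⟨y, hy⟩ := hχ h1
    have h3 : t * y * t⁻¹ * y⁻¹ = t' * y * t'⁻¹ * y⁻¹ := congrArg Subtype.val h2
    have h4 : t * y * t⁻¹ = t' * y * t'⁻¹ := mul_right_cancel h3
    calc t'⁻¹ * t * y = t'⁻¹ * (t * y * t⁻¹) * t := by group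
      _ = _ := by rw [h4]; group
  let Ψ : (Y ⧸ N) → ((Y ⧸ N) →* ℂˣ) := fun q => Φ (q.out : Y) (hcomm _ (q.out).2)
  have hΨ : Function.Injective Ψ := by
    intro q q' h
    have h1 := hΦ _ _ _ _ h
    rw [← QuotientGroup.out_eq' q, ← QuotientGroup.out_eq' q', eq_comm, QuotientGroup.eq]
    refine Subgroup.mem_center_iff.2 fun c => ?_
    ext
    exact (h1 c c.2).symm
  have hcard : Nat.card ((Y ⧸ N) →* ℂˣ) = Nat.card (Y ⧸ N) :=
    CommGroup.card_monoidHom_of_hasEnoughRootsOfUnity (Y ⧸ N) ℂ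
  have hfin : Finite ((Y ⧸ N) →* ℂˣ) := Nat.finite_of_card_ne_zero (by
    rw [hcard]; exact Nat.card_pos.ne')
  have hbij := (Nat.bijective_iff_injective_and_card Ψ).2 ⟨hΨ, hcard.symm⟩
  obtain ⟨q, hq⟩ := hbij.2 (Φ s hs)
  exact ⟨_, (q.out).2, hΦ _ _ _ _ hq.symm⟩

lemma commutator_closure_le {G : Type*} [Group G] (Z : Subgroup G) [Z.Normal] (K : Set G)
    (hK : ∀ a ∈ K, ∀ b ∈ K, a * b * a⁻¹ * b⁻¹ ∈ Z) :
    ⁅Subgroup.closure K, Subgroup.closure K⁆ ≤ Z := by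
  have hc : ∀ x ∈ (QuotientGroup.mk' Z) '' K, ∀ y ∈ (QuotientGroup.mk' Z) '' K,
      x * y = y * x := by
    rintro _ ⟨a, ha, rfl⟩ _ ⟨b, hb, rfl⟩
    have h := (QuotientGroup.eq_one_iff _).2 (hK a ha b hb)
    simp only [QuotientGroup.mk_mul, QuotientGroup.mk_inv] at h
    simp only [QuotientGroup.mk'_apply]
    exact mul_inv_eq_iff_eq_mul.1 (mul_inv_eq_one.1 h)
  have h1 := Subgroup.isMulCommutative_closure hc
  rw [← Subgroup.le_centralizer_iff_isMulCommutative,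
    ← Subgroup.commutator_eq_bot_iff_le_centralizer, ← MonoidHom.map_closure,
    ← Subgroup.map_commutator, Subgroup.map_eq_bot_iff, QuotientGroup.ker_mk'] at h1
  exact h1

lemma exp_p {p : ℕ} (hp : p.Prime) (hodd : Odd p) {G : Type*} [Group G] (X Z : Subgroup G)
    (hZc : Z ≤ Subgroup.center G) (hZp : ∀ z ∈ Z, z ^ p = 1)
    (hX : X = Subgroup.closure {x : G | x ∈ X ∧ x ^ p = 1}) (hXZ : ⁅X, X⁆ ≤ Z) :
    ∀ x ∈ X, x ^ p = 1 := by
  have hZcomm : ∀ z ∈ Z, ∀ g : G, Commute z g := fun z hz g =>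
    ((Subgroup.mem_center_iff.1 (hZc hz)) g).symm
  intro x hx
  rw [hX] at hx
  have : x ∈ X ∧ x ^ p = 1 := by
    induction hx using Subgroup.closure_induction with
    | mem x h => exact h
    | one => exact ⟨X.one_mem, one_pow _⟩
    | inv x _ ih => exact ⟨X.inv_mem ih.1, by rw [inv_pow, ih.2, inv_one]⟩
    | mul x y _ _ hx hy =>
      refine ⟨X.mul_mem hx.1 hy.1, ?_⟩
      have h1 : y * x * y⁻¹ * x⁻¹ ∈ Z := hXZ (Subgroup.commutator_mem_commutator hy.1 hx.1)
      rw [class2_pow_p hp hodd x y (y * x * y⁻¹ * x⁻¹) (hZcomm _ h1 _) (hZcomm _ h1 _) ?_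
        (hZp _ h1), hx.2, hy.2, one_mul]
      rw [← (hZcomm _ h1 _).eq]; group
  exact this.2

/-- Let `p` be an odd prime, `P` a finite noncyclic `p`-group with cyclic center,
`Z = Ω₁(Z(P))`. If `𝒮` is a collection of at least two distinct maximal elements
of `ℳ_Z(P) = {X ≤ P : Z < X = Ω₁(X), [X,X] ≤ Z}`, then `Y = ⋂_{S ∈ 𝒮} S` lies in
`ℳ_Z(P)` and `Y` is not extraspecial. -/
theorem stmt_11 {p : ℕ} (hp : p.Prime) (hodd : Odd p)
    {P : Type*} [Group P] [Finite P] (hP : IsPGroup p P) (hnc : ¬ IsCyclic P)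
    (hcyc : IsCyclic (Subgroup.center P))
    (Z : Subgroup P)
    (hZ : Z = Subgroup.closure {x : P | x ∈ Subgroup.center P ∧ x ^ p = 1})
    (𝒮 : Set (Subgroup P))
    (h𝒮 : ∀ S ∈ 𝒮, (Z < S ∧ S = Subgroup.closure {x : P | x ∈ S ∧ x ^ p = 1} ∧
        ⁅S, S⁆ ≤ Z) ∧
      (∀ T : Subgroup P, Z < T →
        T = Subgroup.closure {x : P | x ∈ T ∧ x ^ p = 1} →
        ⁅T, T⁆ ≤ Z → S ≤ T → T = S))
    (htwo : ∃ S ∈ 𝒮, ∃ T ∈ 𝒮, S ≠ T) :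
    (Z < sInf 𝒮 ∧
      sInf 𝒮 = Subgroup.closure {x : P | x ∈ sInf 𝒮 ∧ x ^ p = 1} ∧
      ⁅sInf 𝒮, sInf 𝒮⁆ ≤ Z) ∧
    ¬ IsExtraspecial p ↥(sInf 𝒮) := by
  have := Fact.mk hp
  have hmemZ : ∀ x : P, x ∈ Z ↔ x ∈ Subgroup.center P ∧ x ^ p = 1 := by
    intro x
    constructor
    · intro hx
      rw [hZ] at hx
      induction hx using Subgroup.closure_induction with
      | mem x h => exact h
      | one => exact ⟨Subgroup.one_mem _, one_pow _⟩
      | inv x _ ih => exact ⟨Subgroup.inv_mem _ ih.1, by rw [inv_pow, ih.2, inv_one]⟩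
      | mul x y _ _ hx hy =>
        refine ⟨Subgroup.mul_mem _ hx.1 hy.1, ?_⟩
        have hc : Commute x y := (Subgroup.mem_center_iff.1 hy.1 x)
        rw [hc.mul_pow, hx.2, hy.2, one_mul]
    · intro hx
      rw [hZ]
      exact Subgroup.subset_closure hx
  have hZc : Z ≤ Subgroup.center P := fun x hx => ((hmemZ x).1 hx).1
  have hZp : ∀ z ∈ Z, z ^ p = 1 := fun x hx => ((hmemZ x).1 hx).2
  have hZcomm : ∀ z ∈ Z, ∀ g : P, z * g = g * z := fun z hz g =>
    ((Subgroup.mem_center_iff.1 (hZc hz)) g).symm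
  have hZn : Z.Normal := ⟨fun z hz g => by
    rw [← hZcomm z hz g]; simpa using hz⟩
  obtain ⟨S₀, hS₀, T₀, hT₀, hST⟩ := htwo
  have hexp : ∀ S ∈ 𝒮, ∀ x ∈ S, x ^ p = 1 := fun S hS =>
    exp_p hp hodd S Z hZc hZp (h𝒮 S hS).1.2.1 (h𝒮 S hS).1.2.2
  obtain ⟨y₀, hy₀S, hy₀Z⟩ := SetLike.exists_of_lt (h𝒮 S₀ hS₀).1.1
  have hcardZ : Nat.card Z = p := by
    have hPn : Nontrivial P := ⟨y₀, 1, fun h => hy₀Z (h ▸ Z.one_mem)⟩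
    have hcn := hP.center_nontrivial
    obtain ⟨q, hq⟩ := exists_prime_orderOf_dvd_card' (G := Subgroup.center P) p
      ((hP.to_subgroup _).card_eq_or_dvd.resolve_left (by
        intro h; rw [Nat.card_eq_one_iff_unique] at h
        exact not_subsingleton _ h.1))
    have hqZ : Subgroup.zpowers (q : P) ≤ Z := by
      rw [Subgroup.zpowers_le, hmemZ]
      refine ⟨q.2, ?_⟩
      rw [← hq]
      exact congrArg Subtype.val (pow_orderOf_eq_one q)
    have hqc : Nat.card (Subgroup.zpowers (q : P)) = p := by
      rw [Nat.card_zpowers, Subgroup.orderOf_coe, hq]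
    have hZq : Z ≤ Subgroup.zpowers (q : P) := fun z hz =>
      cyc_torsion hp (Subgroup.center P) _ (hqZ.trans hZc) hqc z (hZc hz) (hZp z hz)
    rw [le_antisymm hZq hqZ, hqc]
  -- maximal elements absorb suitable elements of order `p`
  have habsorb : ∀ S ∈ 𝒮, ∀ x : P, x ^ p = 1 → (∀ s ∈ S, s * x * s⁻¹ * x⁻¹ ∈ Z) → x ∈ S := by
    intro S hS x hxp hx
    obtain ⟨⟨h1, h2, h3⟩, hmax⟩ := h𝒮 S hS
    have hle : S ≤ Subgroup.closure (insert x (S : Set P)) := fun s hs =>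
      Subgroup.subset_closure (Set.mem_insert_of_mem _ hs)
    have hxT : x ∈ Subgroup.closure (insert x (S : Set P)) :=
      Subgroup.subset_closure (Set.mem_insert _ _)
    have := hmax (Subgroup.closure (insert x (S : Set P))) (h1.trans_le hle) ?_ ?_ hle
    · rw [← this]; exact hxT
    · apply le_antisymm
      · rw [Subgroup.closure_le]
        rintro t (rfl | ht)
        · exact Subgroup.subset_closure ⟨hxT, hxp⟩
        · exact Subgroup.subset_closure ⟨hle ht, hexp S hS t ht⟩
      · rw [Subgroup.closure_le]
        exact fun t ht => ht.1
    · apply commutator_closure_le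
      rintro a (rfl | ha) b (rfl | hb)
      · simp
      · have h := Z.inv_mem (hx b hb)
        have e : (b * a * b⁻¹ * a⁻¹)⁻¹ = a * b * a⁻¹ * b⁻¹ := by group
        rwa [e] at h
      · exact hx a ha
      · exact h3 (Subgroup.commutator_mem_commutator ha hb)
  have hYS : ∀ S ∈ 𝒮, sInf 𝒮 ≤ S := fun S hS => sInf_le hS
  have hYcomm : ⁅sInf 𝒮, sInf 𝒮⁆ ≤ Z :=
    (Subgroup.commutator_mono (hYS S₀ hS₀) (hYS S₀ hS₀)).trans (h𝒮 S₀ hS₀).1.2.2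
  have hZY : Z ≤ sInf 𝒮 := le_sInf fun S hS => (h𝒮 S hS).1.1.le
  refine ⟨⟨?_, ?_, hYcomm⟩, ?_⟩
  · obtain ⟨x, hxZ, hxp, hx⟩ := lemA hp hodd hP Z hcardZ hZc ⟨y₀, hy₀Z, hexp S₀ hS₀ y₀ hy₀S⟩
    refine lt_of_le_of_ne hZY fun h => hxZ ?_
    rw [h]
    exact Subgroup.mem_sInf.2 fun S hS => habsorb S hS x hxp fun s _ => hx s
  · apply le_antisymm
    · exact fun y hy => Subgroup.subset_closure ⟨hy, hexp S₀ hS₀ y (hYS S₀ hS₀ hy)⟩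
    · rw [Subgroup.closure_le]
      exact fun t ht => ht.1
  · rintro ⟨hcard, -⟩
    set Y := sInf 𝒮 with hYdef
    have hYZ : ∀ y ∈ Y, (∀ y' ∈ Y, y * y' = y' * y) → y ∈ Z := by
      have hle : Z ≤ (Subgroup.center Y).map Y.subtype := by
        intro z hz
        refine ⟨⟨z, hZY hz⟩, Subgroup.mem_center_iff.2 fun c => ?_, rfl⟩
        ext
        exact (hZcomm z hz c).symm
      have hcard' : Nat.card ((Subgroup.center Y).map Y.subtype) = p := by
        rw [Subgroup.card_map_of_injective Y.subtype_injective, hcard]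
      have heq := Subgroup.eq_of_le_of_card_ge hle (by rw [hcard', hcardZ])
      intro y hy h
      rw [heq]
      refine ⟨⟨y, hy⟩, Subgroup.mem_center_iff.2 fun c => ?_, rfl⟩
      ext
      exact (h c c.2).symm
    let D : Subgroup P := Subgroup.centralizer (Y : Set P)
    have hdec : ∀ S ∈ 𝒮, ∀ s ∈ S, ∃ y ∈ Y, y⁻¹ * s ∈ D := by
      intro S hS s hs
      obtain ⟨y, hy, h⟩ := lemB hp Y Z hcardZ hZc hYZ
        (fun y hy y' hy' => hYcomm (Subgroup.commutator_mem_commutator hy hy')) s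
        (fun y hy => (h𝒮 S hS).1.2.2 (Subgroup.commutator_mem_commutator hs (hYS S hS hy)))
      exact ⟨y, hy, Subgroup.mem_centralizer_iff.2 fun y' hy' => (h y' hy').symm⟩
    have hZD : Z ≤ D := fun z hz => Subgroup.mem_centralizer_iff.2 fun y _ => (hZcomm z hz y).symm
    obtain ⟨s, hs, hsY⟩ : ∃ s ∈ S₀, s ∉ Y := by
      by_contra! h
      exact hST ((h𝒮 S₀ hS₀).2 T₀ (h𝒮 T₀ hT₀).1.1 (h𝒮 T₀ hT₀).1.2.1 (h𝒮 T₀ hT₀).1.2.2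
        (fun s hs => hYS T₀ hT₀ (h s hs))).symm
    obtain ⟨y, hy, hyD⟩ := hdec S₀ hS₀ s hs
    have hcp : (y⁻¹ * s) ^ p = 1 :=
      hexp S₀ hS₀ _ (S₀.mul_mem (S₀.inv_mem (hYS S₀ hS₀ hy)) hs)
    have hcZ : y⁻¹ * s ∉ Z := fun h =>
      hsY ((Y.mul_mem_cancel_left (Y.inv_mem hy)).1 (hZY h))
    obtain ⟨⟨x, hxD⟩, hxZ, hxp, hx⟩ := lemA hp hodd (hP.to_subgroup D) (Z.subgroupOf D)
      (by rw [Nat.card_congr (Subgroup.subgroupOfEquivOfLe hZD).toEquiv, hcardZ])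
      (by
        intro z hz
        refine Subgroup.mem_center_iff.2 fun c => ?_
        ext
        exact (hZcomm z (Subgroup.mem_subgroupOf.1 hz) c).symm)
      ⟨⟨y⁻¹ * s, hyD⟩, fun h => hcZ (Subgroup.mem_subgroupOf.1 h), Subtype.ext hcp⟩
    have hxp' : x ^ p = 1 := congrArg Subtype.val hxp
    have hx' : ∀ d ∈ D, d * x * d⁻¹ * x⁻¹ ∈ Z := fun d hd =>
      Subgroup.mem_subgroupOf.1 (hx ⟨d, hd⟩)
    have hxY : x ∈ Y := by
      refine Subgroup.mem_sInf.2 fun S hS => habsorb S hS x hxp' fun s hs => ?_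
      obtain ⟨y, hy, hyD⟩ := hdec S hS s hs
      have h1 := hx' _ hyD
      have h2 : y * x = x * y := Subgroup.mem_centralizer_iff.1 hxD y hy
      have h3 := hZn.conj_mem _ h1 y
      have e : y * (y⁻¹ * s * x * (y⁻¹ * s)⁻¹ * x⁻¹) * y⁻¹ = s * x * s⁻¹ * (y * x⁻¹ * y⁻¹) := by
        group
      have e2 : y * x⁻¹ * y⁻¹ = x⁻¹ := by
        rw [mul_inv_eq_iff_eq_mul, eq_inv_mul_iff_mul_eq, ← mul_assoc, ← h2]; group
      rwa [e, e2] at h3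
    exact hxZ (Subgroup.mem_subgroupOf.2 (hYZ x hxY fun y' hy' =>
      (Subgroup.mem_centralizer_iff.1 hxD y' hy').symm))
end
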